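/- Let N ≥ 2, let Ω ⊂ ℝ^N be an open set, and let p > 2. Let β : ℝ → ℝ be a continuous function with β(s) = 0 for s ∉ (0,1). Let ε_j ∈ (0,1] be a sequence with ε_j → 0, and let u_j be twice continuously differentiable functions on Ω satisfying Δu_j(x) = (1/ε_j)β((u_j(x)−1)/ε_j) − (u_j(x)−1)_+^{p−1} for all x ∈ Ω. Suppose u_j converges to a function u : Ω → ℝ uniformly on compact subsets of Ω. Then u is twice continuously differentiable on the open set {x ∈ Ω : u(x) > 1} with −Δu = (u−1)^{p−1} there, and u is harmonic (twice continuously differentiable with Δu = 0) on the open set {x ∈ Ω : u(x) < 1}. -/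

import Mathlib

open MeasureTheory Metric Set Filter

/-- The Laplacian: sum of second partial derivatives. -/
noncomputable def lap {N : ℕ} (u : EuclideanSpace ℝ (Fin N) → ℝ)
    (x : EuclideanSpace ℝ (Fin N)) : ℝ :=
  ∑ i : Fin N, fderiv ℝ (fun y => fderiv ℝ u y (EuclideanSpace.single i 1)) x
    (EuclideanSpace.single i 1)

/-!
The heart of the matter is the interior gradient bound `‖∇w(x)‖ ≤ n M / r + r F / 2` for a function
with `|w| ≤ M` and `|Δw| ≤ F` on a ball of radius `r` around `x`: the odd part of `w` under a
reflection through `x` vanishes on the mirror, and on a half ball the maximum principle compares it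
with an explicit quadratic barrier. Applied to differences `v i - v j`, the bound makes the
gradients locally uniformly Cauchy as soon as `v j` and `Δ (v j)` converge; applied to increments
`w (· + h) - w`, it bounds second derivatives by `∇w` and the Lipschitz constant of `Δw`. Away from
`{u = 1}` the term in `β` vanishes for large `j` and the equation becomes `Δ (v j) = F (v j)` with
`F` of class `C¹`, so that first the gradients and then the Hessians converge, and the equation
passes to the limit.
-/

section

open scoped Topology NNReal
open InnerProductSpace Laplacian

section NormedSpace

variable {X : Type*} [NormedAddCommGroup X] [NormedSpace ℝ X]

theorem deriv_deriv_nonpos_of_isLocalMax {g : ℝ → ℝ} {t : ℝ} (h : IsLocalMax g t)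
    (hc : ContinuousAt g t) : deriv (deriv g) t ≤ 0 := by
  by_contra! hpos
  have hmin : IsLocalMin g t := isLocalMin_of_deriv_deriv_pos hpos h.deriv_eq_zero hc
  have hconst : g =ᶠ[𝓝 t] fun _ => g t := by
    filter_upwards [h, hmin] with s hs hs' using le_antisymm hs hs'
  have hzero : deriv (deriv g) t = 0 := by
    rw [hconst.deriv.deriv_eq]
    simp
  exact hpos.ne' hzero

theorem fderiv_fderiv_apply_self_nonpos_of_isLocalMax {f : X → ℝ} {x : X} (h : IsLocalMax f x)
    (hf : ContDiffAt ℝ 2 f x) (v : X) : fderiv ℝ (fderiv ℝ f) x v v ≤ 0 := by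
  let line : ℝ → X := fun t => x + t • v
  have hline (t : ℝ) : HasDerivAt line v t := by
    simpa [line] using ((hasDerivAt_id t).smul_const v).const_add x
  have hline0 : line 0 = x := by simp [line]
  have htendsto : Tendsto line (𝓝 0) (𝓝 x) := by
    simpa only [hline0] using (hline 0).continuousAt.tendsto
  have hderiv : deriv (f ∘ line) =ᶠ[𝓝 0] fun t => fderiv ℝ f (line t) v := by
    have hdiff : ∀ᶠ y in 𝓝 x, DifferentiableAt ℝ f y :=
      (hf.eventually (by simp)).mono fun y hy => hy.differentiableAt two_ne_zero
    filter_upwards [htendsto.eventually hdiff] with t ht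
    exact (ht.hasFDerivAt.comp_hasDerivAt t (hline t)).deriv
  have hderiv2 : deriv (deriv (f ∘ line)) 0 = fderiv ℝ (fderiv ℝ f) x v v := by
    have hf' : HasFDerivAt (fderiv ℝ f) (fderiv ℝ (fderiv ℝ f) x) (line 0) := by
      rw [hline0]
      exact ((hf.fderiv_right (m := 1) (by norm_num)).differentiableAt one_ne_zero).hasFDerivAt
    rw [hderiv.deriv_eq]
    simpa using ((hf'.comp_hasDerivAt 0 (hline 0)).clm_apply (hasDerivAt_const 0 v)).deriv
  have hmax : IsLocalMax (f ∘ line) 0 := by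
    filter_upwards [htendsto.eventually h] with t ht
    simpa only [Function.comp_apply, hline0] using ht
  have hcont : ContinuousAt (f ∘ line) 0 :=
    ContinuousAt.comp (by simpa only [hline0] using hf.continuousAt) (hline 0).continuousAt
  exact hderiv2 ▸ deriv_deriv_nonpos_of_isLocalMax hmax hcont

theorem fderiv_fderiv_bilinear_self (B : X →L[ℝ] X →L[ℝ] ℝ) (x : X) :
    fderiv ℝ (fderiv ℝ fun y => B y y) x = B + B.flip := by
  have hB : (fderiv ℝ fun y => B y y) = ⇑(B + B.flip) := by
    ext y v
    have h : HasFDerivAt (fun y => B y y) _ y :=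
      B.hasFDerivAt_of_bilinear (hasFDerivAt_id y) (hasFDerivAt_id y)
    simp [h.fderiv]
  rw [hB, ContinuousLinearMap.fderiv]

end NormedSpace

section Laplacian

variable {E : Type*} [NormedAddCommGroup E] [InnerProductSpace ℝ E] [FiniteDimensional ℝ E]
  {ι : Type*} [Fintype ι]

theorem laplacian_eq_sum_fderiv_fderiv (b : OrthonormalBasis ι ℝ E) (f : E → ℝ) (x : E) :
    Δ f x = ∑ i, fderiv ℝ (fderiv ℝ f) x (b i) (b i) := by
  simp [laplacian_eq_iteratedFDeriv_orthonormalBasis f b, iteratedFDeriv_two_apply]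

theorem laplacian_nonpos_of_isLocalMax {f : E → ℝ} {x : E} (h : IsLocalMax f x)
    (hf : ContDiffAt ℝ 2 f x) : Δ f x ≤ 0 := by
  rw [laplacian_eq_sum_fderiv_fderiv (stdOrthonormalBasis ℝ E)]
  exact Finset.sum_nonpos fun i _ => fderiv_fderiv_apply_self_nonpos_of_isLocalMax h hf _

theorem laplacian_continuousLinearMap (L : E →L[ℝ] ℝ) (x : E) : Δ (⇑L) x = 0 := by
  have hL : fderiv ℝ L = fun _ => L := funext fun _ => L.fderiv
  simp [laplacian_eq_sum_fderiv_fderiv (stdOrthonormalBasis ℝ E), hL]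

theorem laplacian_bilinear_self (b : OrthonormalBasis ι ℝ E) (B : E →L[ℝ] E →L[ℝ] ℝ) (x : E) :
    Δ (fun y => B y y) x = 2 * ∑ i, B (b i) (b i) := by
  simp only [laplacian_eq_sum_fderiv_fderiv b, fderiv_fderiv_bilinear_self,
    add_apply, ContinuousLinearMap.flip_apply, ← two_mul, Finset.mul_sum]

theorem laplacian_norm_sq (x : E) : Δ (fun y : E => ‖y‖ ^ 2) x = 2 * Module.finrank ℝ E := by
  let B : E →L[ℝ] E →L[ℝ] ℝ := innerSL ℝ
  have hB (y : E) : B y y = ‖y‖ ^ 2 := real_inner_self_eq_norm_sq y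
  simp only [← hB]
  rw [laplacian_bilinear_self (stdOrthonormalBasis ℝ E)]
  simp [hB]

theorem laplacian_inner_sq (e x : E) : Δ (fun y => inner ℝ e y ^ 2) x = 2 * ‖e‖ ^ 2 := by
  have h := laplacian_bilinear_self (stdOrthonormalBasis ℝ E)
    ((innerSL ℝ e).smulRight (innerSL ℝ e)) x
  simpa [innerSL_apply_apply, ← pow_two, (stdOrthonormalBasis ℝ E).sum_sq_inner_left] using h

theorem laplacian_comp_linearIsometryEquiv (e : E ≃ₗᵢ[ℝ] E) (f : E → ℝ) (x : E) :
    Δ (f ∘ e) x = Δ f (e x) := by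
  have hcomp : iteratedFDeriv ℝ 2 (f ∘ e) x = (iteratedFDeriv ℝ 2 f (e x)).compContinuousLinearMap
      fun _ => e.toContinuousLinearEquiv := by
    have h := e.toContinuousLinearEquiv.iteratedFDerivWithin_comp_right f uniqueDiffOn_univ
      (mem_univ (e x)) 2
    simp only [preimage_univ, iteratedFDerivWithin_univ] at h
    exact h
  let b := stdOrthonormalBasis ℝ E
  rw [laplacian_eq_iteratedFDeriv_orthonormalBasis _ b,
    laplacian_eq_iteratedFDeriv_orthonormalBasis _ (b.map e)]
  refine Finset.sum_congr rfl fun i _ => ?_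
  rw [hcomp, ContinuousMultilinearMap.compContinuousLinearMap_apply]
  congr 1
  ext j
  fin_cases j <;> simp

theorem laplacian_comp_add_right (f : E → ℝ) (a x : E) :
    Δ (fun y => f (y + a)) x = Δ f (x + a) := by
  simp only [laplacian_eq_iteratedFDeriv_stdOrthonormalBasis, iteratedFDeriv_comp_add_right]

theorem le_of_laplacian_pos {K U : Set E} (hK : IsCompact K) (hU : IsOpen U) (hUK : U ⊆ K)
    {w : E → ℝ} (hwK : ContinuousOn w K) (hwU : ContDiffOn ℝ 2 w U) (hΔ : ∀ y ∈ U, 0 < Δ w y)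
    {M : ℝ} (hM : ∀ y ∈ K \ U, w y ≤ M) {x : E} (hx : x ∈ K) : w x ≤ M := by
  obtain ⟨z, hzK, hz⟩ := hK.exists_isMaxOn ⟨x, hx⟩ hwK
  have hzU : z ∉ U := fun hzU =>
    (hΔ z hzU).not_ge <| laplacian_nonpos_of_isLocalMax
      (hz.isLocalMax (mem_of_superset (hU.mem_nhds hzU) hUK)) (hwU.contDiffAt (hU.mem_nhds hzU))
  exact (hz hx).trans (hM z ⟨hzK, hzU⟩)

theorem le_of_laplacian_nonneg [Nontrivial E] {K U : Set E} (hK : IsCompact K) (hU : IsOpen U)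
    (hUK : U ⊆ K) {w : E → ℝ} (hwK : ContinuousOn w K) (hwU : ContDiffOn ℝ 2 w U)
    (hΔ : ∀ y ∈ U, 0 ≤ Δ w y) {M : ℝ} (hM : ∀ y ∈ K \ U, w y ≤ M) {x : E} (hx : x ∈ K) :
    w x ≤ M := by
  obtain ⟨D, hD⟩ := hK.exists_bound_of_continuousOn (f := fun y : E => ‖y‖ ^ 2) (by fun_prop)
  have hD' (y : E) (hy : y ∈ K) : ‖y‖ ^ 2 ≤ D := by simpa using hD y hy
  have hperturbed (δ : ℝ) (hδ : 0 < δ) : w x ≤ M + δ * D := by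
    have hquad : ContDiff ℝ 2 (δ • fun y : E => ‖y‖ ^ 2) := (contDiff_norm_sq ℝ).const_smul δ
    have hΔpos (y : E) (hy : y ∈ U) : 0 < Δ (w + δ • fun y : E => ‖y‖ ^ 2) y := by
      rw [(hwU.contDiffAt (hU.mem_nhds hy)).laplacian_add hquad.contDiffAt,
        laplacian_smul δ (contDiff_norm_sq ℝ).contDiffAt, laplacian_norm_sq]
      have hn : (0 : ℝ) < Module.finrank ℝ E := mod_cast Module.finrank_pos
      exact add_pos_of_nonneg_of_pos (hΔ y hy) (by rw [smul_eq_mul]; positivity)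
    have hle := le_of_laplacian_pos hK hU hUK (hwK.add hquad.continuous.continuousOn)
      (hwU.add hquad.contDiffOn) hΔpos (M := M + δ * D)
      (fun y hy => add_le_add (hM y hy) (mul_le_mul_of_nonneg_left (hD' y hy.1) hδ.le)) hx
    exact (le_add_of_nonneg_right (mul_nonneg hδ.le (sq_nonneg _))).trans hle
  have hlim : Tendsto (fun δ => M + δ * D) (𝓝[>] 0) (𝓝 M) := by
    have hcont : Continuous fun δ : ℝ => M + δ * D := by fun_prop
    simpa using (hcont.tendsto 0).mono_left nhdsWithin_le_nhds
  exact ge_of_tendsto hlim (eventually_mem_nhdsWithin.mono hperturbed)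

/-- The barrier `M / r² ‖y‖² + (n M / r² + F / 2) t (r - t)`, with `t = ⟪e, y⟫` and `n = dim E`, on
the half ball `{‖y‖ ≤ r, 0 ≤ t}`: a solution of `Δ h = -F` which is nonnegative on the flat face
and at least `M` on the spherical one. -/
noncomputable def halfBallBarrier (e : E) (r M F : ℝ) (y : E) : ℝ :=
  M / r ^ 2 * ‖y‖ ^ 2 +
    (Module.finrank ℝ E * (M / r ^ 2) + F / 2) * (inner ℝ e y * (r - inner ℝ e y))

omit [FiniteDimensional ℝ E] in
theorem contDiff_halfBallBarrier (e : E) (r M F : ℝ) : ContDiff ℝ 2 (halfBallBarrier e r M F) :=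
  have hinner : ContDiff ℝ 2 fun y : E => inner ℝ e y := contDiff_const.inner ℝ contDiff_id
  (contDiff_const.mul (contDiff_norm_sq ℝ)).add
    (contDiff_const.mul (hinner.mul (contDiff_const.sub hinner)))

theorem laplacian_halfBallBarrier {e : E} (he : ‖e‖ = 1) (r M F : ℝ) (y : E) :
    Δ (halfBallBarrier e r M F) y = -F := by
  set k : ℝ := Module.finrank ℝ E * (M / r ^ 2) + F / 2 with hk
  have hsplit : halfBallBarrier e r M F =
      ((M / r ^ 2) • fun y => ‖y‖ ^ 2) +
        ((k * r) • ⇑(innerSL ℝ e) - k • fun y => inner ℝ e y ^ 2) := by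
    ext y
    simp only [halfBallBarrier, ← hk, Pi.add_apply, Pi.sub_apply, Pi.smul_apply, smul_eq_mul,
      innerSL_apply_apply]
    ring
  have hnorm : ContDiff ℝ 2 fun y : E => ‖y‖ ^ 2 := contDiff_norm_sq ℝ
  have hinner : ContDiff ℝ 2 (innerSL ℝ e) := (innerSL ℝ e).contDiff
  have hsq : ContDiff ℝ 2 fun y : E => inner ℝ e y ^ 2 := hinner.pow 2
  have hnorm' : ContDiff ℝ 2 ((M / r ^ 2) • fun y : E => ‖y‖ ^ 2) :=
    hnorm.const_smul (M / r ^ 2)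
  have hinner' : ContDiff ℝ 2 ((k * r) • ⇑(innerSL ℝ e)) := hinner.const_smul (k * r)
  have hsq' : ContDiff ℝ 2 (k • fun y : E => inner ℝ e y ^ 2) := hsq.const_smul k
  have hparabola : ContDiff ℝ 2 ((k * r) • ⇑(innerSL ℝ e) - k • fun y : E => inner ℝ e y ^ 2) :=
    hinner'.sub hsq'
  rw [hsplit, hnorm'.contDiffAt.laplacian_add hparabola.contDiffAt,
    hinner'.contDiffAt.laplacian_sub hsq'.contDiffAt, laplacian_smul _ hnorm.contDiffAt,
    laplacian_smul _ hinner.contDiffAt, laplacian_smul _ hsq.contDiffAt, laplacian_norm_sq,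
    laplacian_continuousLinearMap, laplacian_inner_sq, he]
  simp only [smul_eq_mul]
  linear_combination (-2) * hk

theorem le_halfBallBarrier {e : E} (he : ‖e‖ = 1) {r M F : ℝ} (hr : 0 < r) (hM : 0 ≤ M)
    (hF : 0 ≤ F) {g : E → ℝ} (hgc : ContinuousOn g (closedBall 0 r))
    (hg : ContDiffOn ℝ 2 g (ball 0 r)) (hΔ : ∀ y ∈ ball 0 r, -F ≤ Δ g y)
    (hsphere : ∀ y ∈ sphere 0 r, g y ≤ M)
    (hflat : ∀ y ∈ closedBall 0 r, inner ℝ e y = 0 → g y ≤ 0) {x : E}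
    (hx : x ∈ closedBall 0 r) (hx0 : 0 ≤ inner ℝ e x) : g x ≤ halfBallBarrier e r M F x := by
  have : Nontrivial E := ⟨e, 0, by rintro rfl; simp at he⟩
  have hsmooth := contDiff_halfBallBarrier e r M F
  have hinner : Continuous fun y : E => inner ℝ e y := by fun_prop
  have hboundary (y : E) (hy : y ∈ (closedBall 0 r ∩ {y | 0 ≤ inner ℝ e y}) \
      (ball 0 r ∩ {y | 0 < inner ℝ e y})) : g y - halfBallBarrier e r M F y ≤ 0 := by
    obtain ⟨⟨hyr, hy0⟩, hyU⟩ := hy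
    have hyr' : ‖y‖ ≤ r := by simpa using hyr
    have hyi : inner ℝ e y ≤ r := (real_inner_le_norm e y).trans (by rwa [he, one_mul])
    have hparabola : 0 ≤ (Module.finrank ℝ E * (M / r ^ 2) + F / 2) *
        (inner ℝ e y * (r - inner ℝ e y)) :=
      mul_nonneg (by positivity) (mul_nonneg hy0 (sub_nonneg.2 hyi))
    rw [sub_nonpos, halfBallBarrier]
    rcases hyr'.lt_or_eq with hlt | heq
    · have hyflat : inner ℝ e y = 0 :=
        le_antisymm (not_lt.1 fun h => hyU ⟨by simpa using hlt, h⟩) hy0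
      exact (hflat y hyr hyflat).trans (add_nonneg (by positivity) hparabola)
    · rw [heq, div_mul_cancel₀ M (by positivity)]
      exact (hsphere y (by simpa using heq)).trans (le_add_of_nonneg_right hparabola)
  refine sub_nonpos.1 (le_of_laplacian_nonneg (w := g - halfBallBarrier e r M F)
    ((isCompact_closedBall 0 r).inter_right (isClosed_le continuous_const hinner))
    (isOpen_ball.inter (isOpen_lt continuous_const hinner))
    (inter_subset_inter ball_subset_closedBall fun _ => le_of_lt (α := ℝ))
    ((hgc.sub hsmooth.continuous.continuousOn).mono inter_subset_left)
    ((hg.sub hsmooth.contDiffOn).mono inter_subset_left) (fun y hy => ?_) hboundary ⟨hx, hx0⟩)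
  rw [(hg.contDiffAt (isOpen_ball.mem_nhds hy.1)).laplacian_sub hsmooth.contDiffAt,
    laplacian_halfBallBarrier he]
  linarith [hΔ y hy.1]

-- The left-hand side is the odd part of `w` under reflection in `eᗮ`, so it vanishes there.
theorem half_sub_reflection_le_halfBallBarrier {e : E} (he : ‖e‖ = 1) {r M F : ℝ} (hr : 0 < r)
    (hM : 0 ≤ M) (hF : 0 ≤ F) {w : E → ℝ} (hwc : ContinuousOn w (closedBall 0 r))
    (hw : ContDiffOn ℝ 2 w (ball 0 r)) (hwM : ∀ y ∈ closedBall 0 r, |w y| ≤ M)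
    (hΔ : ∀ y ∈ ball 0 r, |Δ w y| ≤ F) {x : E} (hx : x ∈ closedBall 0 r)
    (hx0 : 0 ≤ inner ℝ e x) :
    (w x - w ((ℝ ∙ e)ᗮ.reflection x)) / 2 ≤ halfBallBarrier e r M F x := by
  set R := (ℝ ∙ e)ᗮ.reflection
  have hRclosed : MapsTo R (closedBall 0 r) (closedBall 0 r) := fun y hy => by simpa using hy
  have hRball : MapsTo R (ball 0 r) (ball 0 r) := fun y hy => by simpa using hy
  have hwR : ContDiffOn ℝ 2 (w ∘ R) (ball 0 r) := hw.comp R.contDiff.contDiffOn hRball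
  have hodd (y : E) : ((1 / 2 : ℝ) • (w - w ∘ R)) y = (w y - w (R y)) / 2 := by
    simp only [Pi.smul_apply, Pi.sub_apply, Function.comp_apply, smul_eq_mul]
    ring
  rw [← hodd]
  refine le_halfBallBarrier he hr hM hF
    ((hwc.sub (hwc.comp R.continuous.continuousOn hRclosed)).const_smul _)
    ((hw.sub hwR).const_smul _) (fun y hy => ?_) (fun y hy => ?_) (fun y _ hy0 => ?_) hx hx0
  · have hat := hw.contDiffAt (isOpen_ball.mem_nhds hy)
    have hRat := hwR.contDiffAt (isOpen_ball.mem_nhds hy)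
    have hsub : ContDiffAt ℝ 2 (w - w ∘ R) y := hat.sub hRat
    rw [laplacian_smul _ hsub, hat.laplacian_sub hRat,
      laplacian_comp_linearIsometryEquiv, smul_eq_mul]
    linarith [(abs_le.1 (hΔ y hy)).1, (abs_le.1 (hΔ (R y) (hRball hy))).2]
  · have hy' := sphere_subset_closedBall hy
    rw [hodd]
    linarith [(abs_le.1 (hwM y hy')).2, (abs_le.1 (hwM (R y) (hRclosed hy'))).1]
  · have hRy : R y = y := Submodule.reflection_mem_subspace_eq_self
      (Submodule.mem_orthogonal_singleton_iff_inner_right.2 hy0)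
    rw [hodd, hRy, sub_self, zero_div]

theorem fderiv_zero_apply_le_of_abs_laplacian_le {e : E} (he : ‖e‖ = 1) {r M F : ℝ} (hr : 0 < r)
    (hM : 0 ≤ M) (hF : 0 ≤ F) {w : E → ℝ} (hwc : ContinuousOn w (closedBall 0 r))
    (hw : ContDiffOn ℝ 2 w (ball 0 r)) (hwM : ∀ y ∈ closedBall 0 r, |w y| ≤ M)
    (hΔ : ∀ y ∈ ball 0 r, |Δ w y| ≤ F) :
    fderiv ℝ w 0 e ≤ Module.finrank ℝ E * M / r + r * F / 2 := by
  have hdiff : HasFDerivAt w (fderiv ℝ w 0) 0 :=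
    ((hw.contDiffAt (ball_mem_nhds 0 hr)).differentiableAt two_ne_zero).hasFDerivAt
  have hslope : Tendsto (fun t : ℝ => t⁻¹ * ((w (t • e) - w (-(t • e))) / 2)) (𝓝[>] 0)
      (𝓝 (fderiv ℝ w 0 e)) := by
    have hline := ((hdiff.hasLineDerivAt e).sub (hdiff.hasLineDerivAt (-e))).div_const 2
    simpa [add_self_div_two] using hline.tendsto_slope_zero_right
  have hbarrier : ∀ᶠ t : ℝ in 𝓝[>] 0, t⁻¹ * ((w (t • e) - w (-(t • e))) / 2) ≤
      M / r ^ 2 * t + (Module.finrank ℝ E * (M / r ^ 2) + F / 2) * (r - t) := by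
    filter_upwards [Ioc_mem_nhdsGT hr] with t ⟨ht, htr⟩
    have hle := half_sub_reflection_le_halfBallBarrier he hr hM hF hwc hw hwM hΔ (x := t • e)
      (by simpa [norm_smul, he, abs_of_pos ht] using htr)
      (by simp [inner_smul_right, he, ht.le])
    rw [map_smul, Submodule.reflection_orthogonalComplement_singleton_eq_neg, smul_neg,
      halfBallBarrier, norm_smul, inner_smul_right, real_inner_self_eq_norm_sq, he,
      Real.norm_of_nonneg ht.le] at hle
    rw [inv_mul_le_iff₀ ht]
    linarith
  have hlim : Tendsto (fun t : ℝ =>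
      M / r ^ 2 * t + (Module.finrank ℝ E * (M / r ^ 2) + F / 2) * (r - t)) (𝓝[>] 0)
      (𝓝 (Module.finrank ℝ E * M / r + r * F / 2)) := by
    refine (Continuous.tendsto' (by fun_prop) 0 _ ?_).mono_left nhdsWithin_le_nhds
    field_simp
    ring
  exact le_of_tendsto_of_tendsto hslope hlim hbarrier

theorem norm_fderiv_le_of_abs_laplacian_le {x : E} {r M F : ℝ} (hr : 0 < r) {w : E → ℝ}
    (hwc : ContinuousOn w (closedBall x r)) (hw : ContDiffOn ℝ 2 w (ball x r))
    (hwM : ∀ y ∈ closedBall x r, |w y| ≤ M) (hΔ : ∀ y ∈ ball x r, |Δ w y| ≤ F) :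
    ‖fderiv ℝ w x‖ ≤ Module.finrank ℝ E * M / r + r * F / 2 := by
  have hM : 0 ≤ M := (abs_nonneg _).trans (hwM x (mem_closedBall_self hr.le))
  have hF : 0 ≤ F := (abs_nonneg _).trans (hΔ x (mem_ball_self hr))
  have hclosed : MapsTo (· + x) (closedBall 0 r) (closedBall x r) := fun y hy => by simpa using hy
  have hball : MapsTo (· + x) (ball 0 r) (ball x r) := fun y hy => by simpa using hy
  have hle (e : E) (he : ‖e‖ = 1) :
      fderiv ℝ w x e ≤ Module.finrank ℝ E * M / r + r * F / 2 := by
    have h := fderiv_zero_apply_le_of_abs_laplacian_le he hr hM hF (w := fun y => w (y + x))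
      (hwc.comp (by fun_prop) hclosed) (hw.comp (by fun_prop) hball)
      (fun y hy => hwM _ (hclosed hy))
      fun y hy => by simpa only [laplacian_comp_add_right] using hΔ _ (hball hy)
    rwa [fderiv_comp_add_right, zero_add] at h
  refine ContinuousLinearMap.opNorm_le_of_unit_norm (by positivity) fun e he => abs_le'.2
    ⟨hle e he, ?_⟩
  simpa using hle (-e) (by rwa [norm_neg])

theorem norm_fderiv_fderiv_le_of_lipschitzOnWith_laplacian {x : E} {r M : ℝ} {L : ℝ≥0} (hr : 0 < r)
    {w : E → ℝ} (hw : ContDiffOn ℝ 2 w (ball x (2 * r)))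
    (hM : ∀ y ∈ ball x (2 * r), ‖fderiv ℝ w y‖ ≤ M)
    (hL : LipschitzOnWith L (Δ w) (ball x (2 * r))) :
    ‖fderiv ℝ (fderiv ℝ w) x‖ ≤ Module.finrank ℝ E * M / r + r * L / 2 := by
  have hat (y : E) (hy : y ∈ ball x (2 * r)) : ContDiffAt ℝ 2 w y :=
    hw.contDiffAt (isOpen_ball.mem_nhds hy)
  have hx : x ∈ ball x (2 * r) := mem_ball_self (by positivity)
  have hM0 : 0 ≤ M := (norm_nonneg _).trans (hM x hx)
  refine norm_fderiv_le_of_lip' ℝ (by positivity) ?_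
  filter_upwards [ball_mem_nhds x hr] with z hz
  set h := z - x
  have hhr : ‖h‖ < r := by simpa [dist_eq_norm] using hz
  have hball (y : E) (hy : y ∈ closedBall x r) : y ∈ ball x (2 * r) :=
    closedBall_subset_ball (by linarith) hy
  have hshift (y : E) (hy : y ∈ closedBall x r) : y + h ∈ ball x (2 * r) := by
    have hdist : dist (y + h) y = ‖h‖ := by simp
    have := dist_triangle (y + h) y x
    rw [mem_closedBall] at hy
    rw [mem_ball]
    linarith
  have hshiftat (y : E) (hy : y ∈ closedBall x r) : ContDiffAt ℝ 2 (fun y => w (y + h)) y :=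
    (hat _ (hshift y hy)).comp y (contDiff_id.add contDiff_const).contDiffAt
  have hdiff (y : E) (hy : y ∈ closedBall x r) : ContDiffAt ℝ 2 ((fun y => w (y + h)) - w) y :=
    (hshiftat y hy).sub (hat y (hball y hy))
  have hgrad := norm_fderiv_le_of_abs_laplacian_le (M := M * ‖h‖) (F := L * ‖h‖) hr
    (fun y hy => (hdiff y hy).continuousAt.continuousWithinAt)
    (fun y hy => (hdiff y (ball_subset_closedBall hy)).contDiffWithinAt)
    (fun y hy => by
      simpa using (convex_ball x (2 * r)).norm_image_sub_le_of_norm_fderiv_le (𝕜 := ℝ)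
        (fun z hz => (hat z hz).differentiableAt two_ne_zero) hM (hball y hy) (hshift y hy))
    fun y hy => by
      have hy' := ball_subset_closedBall hy
      rw [(hshiftat y hy').laplacian_sub (hat y (hball y hy')), laplacian_comp_add_right]
      simpa [Real.dist_eq] using hL.dist_le_mul _ (hshift y hy') _ (hball y hy')
  have hxc : x ∈ closedBall x r := mem_closedBall_self hr.le
  rw [fderiv_sub ((hshiftat x hxc).differentiableAt two_ne_zero)
    ((hat x hx).differentiableAt two_ne_zero), fderiv_comp_add_right,
    show x + h = z from add_sub_cancel x z] at hgrad
  exact hgrad.trans_eq (by ring)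

end Laplacian

section UniformLimits

variable {ι : Type*} {l : Filter ι}

theorem eventually_prod_nhds_eventually_nhds {α : Type*} [TopologicalSpace α] {x : α}
    {P : ι × α → Prop} (h : ∀ᶠ q in l ×ˢ 𝓝 x, P q) :
    ∀ᶠ q in l ×ˢ 𝓝 x, ∀ᶠ y in 𝓝 q.2, P (q.1, y) := by
  obtain ⟨p, hp, s, hs, hps⟩ := eventually_prod_iff.1 h
  filter_upwards [hp.prod_mk (eventually_eventually_nhds.2 hs)] with q hq
  exact hq.2.mono fun y hy => hps hq.1 hy

theorem eventually_hasFDerivAt_of_eventually_eq_comp {X : Type*} [NormedAddCommGroup X]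
    [NormedSpace ℝ X] {v w : ι → X → ℝ} {F : ℝ → ℝ} {x : X} {s : ℝ}
    (hv : Tendsto (fun q : ι × X => v q.1 q.2) (l ×ˢ 𝓝 x) (𝓝 s))
    (hvdiff : ∀ᶠ q : ι × X in l ×ˢ 𝓝 x, DifferentiableAt ℝ (v q.1) q.2)
    (hF : ∀ᶠ t in 𝓝 s, DifferentiableAt ℝ F t)
    (hw : ∀ᶠ q : ι × X in l ×ˢ 𝓝 x, w q.1 q.2 = F (v q.1 q.2)) :
    ∀ᶠ q : ι × X in l ×ˢ 𝓝 x,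
      HasFDerivAt (w q.1) (deriv F (v q.1 q.2) • fderiv ℝ (v q.1) q.2) q.2 := by
  filter_upwards [eventually_prod_nhds_eventually_nhds hw, hv.eventually hF, hvdiff]
    with q hwq hFq hvq
  exact (hFq.hasDerivAt.comp_hasFDerivAt q.2 hvq.hasFDerivAt).congr_of_eventuallyEq hwq

theorem tendstoLocallyUniformlyOn_iff_tendsto_prod_nhds {α β : Type*} [TopologicalSpace α]
    [UniformSpace β] {U : Set α} (hU : IsOpen U) {v : ι → α → β} {u : α → β}
    (hu : ContinuousOn u U) :
    TendstoLocallyUniformlyOn v u l U ↔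
      ∀ x ∈ U, Tendsto (fun q : ι × α => v q.1 q.2) (l ×ˢ 𝓝 x) (𝓝 (u x)) := by
  rw [hU.tendstoLocallyUniformlyOn_iff_forall_tendsto]
  refine forall₂_congr fun x hx => ?_
  have hux : Tendsto (fun q : ι × α => u q.2) (l ×ˢ 𝓝 x) (𝓝 (u x)) :=
    (hu.continuousAt (hU.mem_nhds hx)).tendsto.comp tendsto_snd
  exact ⟨fun h => (Uniform.tendsto_congr h).1 hux,
    fun h => (hux.prodMk_nhds h).mono_right (nhds_le_uniformity _)⟩

theorem uniformCauchySeqOn_iff_norm_sub_lt {α V : Type*} [SeminormedAddCommGroup V]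
    {f : ι → α → V} {s : Set α} :
    UniformCauchySeqOn f l s ↔
      ∀ ε > 0, ∀ᶠ q : ι × ι in l ×ˢ l, ∀ x ∈ s, ‖f q.1 x - f q.2 x‖ < ε := by
  simp only [← dist_eq_norm]
  refine ⟨fun h ε hε => h _ (dist_mem_uniformity hε), fun h t ht => ?_⟩
  obtain ⟨ε, hε, hεt⟩ := mem_uniformity_dist.1 ht
  exact (h ε hε).mono fun q hq x hx => hεt (hq x hx)

theorem uniformCauchySeqOn_of_tendstoLocallyUniformlyOn_of_isCompact {α β : Type*}
    [TopologicalSpace α] [UniformSpace β] {K : Set α} (hK : IsCompact K) {f : ι → α → β}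
    {g : α → β} (h : TendstoLocallyUniformlyOn f g l K) : UniformCauchySeqOn f l K :=
  ((tendstoLocallyUniformlyOn_iff_tendstoUniformlyOn_of_compact hK).1 h).uniformCauchySeqOn

theorem uniformCauchySeqOn_of_norm_sub_le {α β V₁ V₂ W : Type*} [SeminormedAddCommGroup V₁]
    [SeminormedAddCommGroup V₂] [SeminormedAddCommGroup W] {K : Set α} {s : Set β}
    {f : ι → α → V₁} {g : ι → α → V₂} {h : ι → β → W} {C : ℝ} (hC : 0 ≤ C)
    (hle : ∀ᶠ q : ι × ι in l ×ˢ l, ∀ δ, (∀ y ∈ K, ‖f q.1 y - f q.2 y‖ ≤ δ) →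
      (∀ y ∈ K, ‖g q.1 y - g q.2 y‖ ≤ δ) → ∀ x ∈ s, ‖h q.1 x - h q.2 x‖ ≤ C * δ)
    (hf : UniformCauchySeqOn f l K) (hg : UniformCauchySeqOn g l K) :
    UniformCauchySeqOn h l s := by
  rw [uniformCauchySeqOn_iff_norm_sub_lt] at *
  intro ε hε
  have hδ : 0 < ε / (C + 1) := by positivity
  filter_upwards [hle, hf _ hδ, hg _ hδ] with q hq hfq hgq x hx
  calc ‖h q.1 x - h q.2 x‖
    _ ≤ C * (ε / (C + 1)) := hq _ (fun y hy => (hfq y hy).le) (fun y hy => (hgq y hy).le) x hx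
    _ < (C + 1) * (ε / (C + 1)) := by gcongr; exact lt_add_one C
    _ = ε := mul_div_cancel₀ ε (by positivity)

theorem tendstoLocallyUniformlyOn_fderiv_of_uniformCauchySeqOn {𝕜 X V : Type*} [RCLike 𝕜]
    [NormedAddCommGroup X] [NormedSpace 𝕜 X] [NormedAddCommGroup V] [NormedSpace 𝕜 V]
    [CompleteSpace V] [l.NeBot] {U : Set X} (hU : IsOpen U) {v : ι → X → V} {u : X → V}
    (hv : ∀ j, DifferentiableOn 𝕜 (v j) U) (hvu : ∀ x ∈ U, Tendsto (v · x) l (𝓝 (u x)))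
    (hcauchy : ∀ x ∈ U, ∃ t ∈ 𝓝 x, UniformCauchySeqOn (fun j => fderiv 𝕜 (v j)) l t) :
    DifferentiableOn 𝕜 u U ∧
      TendstoLocallyUniformlyOn (fun j => fderiv 𝕜 (v j)) (fderiv 𝕜 u) l U := by
  have hpointwise (x : X) (hx : x ∈ U) : ∃ φ, Tendsto (fun j => fderiv 𝕜 (v j) x) l (𝓝 φ) := by
    obtain ⟨t, ht, hcauchy⟩ := hcauchy x hx
    exact CompleteSpace.complete (hcauchy.cauchy_map (mem_of_mem_nhds ht))
  choose! g hg using hpointwise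
  have hunif : TendstoLocallyUniformlyOn (fun j => fderiv 𝕜 (v j)) g l U := by
    refine tendstoLocallyUniformlyOn_of_forall_exists_nhds fun x hx => ?_
    obtain ⟨t, ht, hcauchy⟩ := hcauchy x hx
    exact ⟨t ∩ U, inter_mem (mem_nhdsWithin_of_mem_nhds ht) self_mem_nhdsWithin,
      (hcauchy.mono inter_subset_left).tendstoUniformlyOn_of_tendsto fun y hy => hg y hy.2⟩
  have hderiv (x : X) (hx : x ∈ U) : HasFDerivAt u (g x) x :=
    hasFDerivAt_of_tendsto_locally_uniformly_on' hU hunif hv hvu hx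
  exact ⟨fun x hx => (hderiv x hx).differentiableAt.differentiableWithinAt,
    hunif.congr_right fun x hx => (hderiv x hx).fderiv.symm⟩

end UniformLimits

section LaplacianConvergence

variable {E : Type*} [NormedAddCommGroup E] [InnerProductSpace ℝ E] [FiniteDimensional ℝ E]
  {ι : Type*} {l : Filter ι} {v : ι → E → ℝ}

theorem uniformCauchySeqOn_fderiv_of_laplacian {s K : Set E} {r : ℝ} (hr : 0 < r)
    (hsK : ∀ x ∈ s, closedBall x r ⊆ K) (hv : ∀ j, ∀ y ∈ K, ContDiffAt ℝ 2 (v j) y)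
    (hcauchy : UniformCauchySeqOn v l K) (hcauchyΔ : UniformCauchySeqOn (fun j => Δ (v j)) l K) :
    UniformCauchySeqOn (fun j => fderiv ℝ (v j)) l s := by
  refine uniformCauchySeqOn_of_norm_sub_le (C := Module.finrank ℝ E / r + r / 2) (by positivity)
    (.of_forall fun q δ hδ hδΔ x hx => ?_) hcauchy hcauchyΔ
  have hvx (j : ι) (y : E) (hy : y ∈ closedBall x r) : ContDiffAt ℝ 2 (v j) y :=
    hv j y (hsK x hx hy)
  have hsub (y : E) (hy : y ∈ closedBall x r) : ContDiffAt ℝ 2 (v q.1 - v q.2) y :=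
    (hvx q.1 y hy).sub (hvx q.2 y hy)
  have hgrad := norm_fderiv_le_of_abs_laplacian_le (w := v q.1 - v q.2) hr
    (fun y hy => (hsub y hy).continuousAt.continuousWithinAt)
    (fun y hy => (hsub y (ball_subset_closedBall hy)).contDiffWithinAt)
    (fun y hy => hδ y (hsK x hx hy)) fun y hy => by
      have hy' := ball_subset_closedBall hy
      rw [(hvx q.1 y hy').laplacian_sub (hvx q.2 y hy')]
      exact hδΔ y (hsK x hx hy')
  have hxr := mem_closedBall_self hr.le (x := x)
  rw [fderiv_sub ((hvx q.1 x hxr).differentiableAt two_ne_zero)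
    ((hvx q.2 x hxr).differentiableAt two_ne_zero)] at hgrad
  exact hgrad.trans_eq (by ring)

theorem uniformCauchySeqOn_fderiv_fderiv_of_laplacian {s K : Set E} {r : ℝ} (hr : 0 < r)
    (hsK : ∀ x ∈ s, ball x (2 * r) ⊆ K) (hv : ∀ j, ∀ y ∈ K, ContDiffAt ℝ 2 (v j) y)
    (hvΔ : ∀ᶠ j in l, ∀ y ∈ K, DifferentiableAt ℝ (Δ (v j)) y)
    (hcauchy : UniformCauchySeqOn (fun j => fderiv ℝ (v j)) l K)
    (hcauchyΔ : UniformCauchySeqOn (fun j => fderiv ℝ (Δ (v j))) l K) :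
    UniformCauchySeqOn (fun j => fderiv ℝ (fderiv ℝ (v j))) l s := by
  refine uniformCauchySeqOn_of_norm_sub_le (W := E →L[ℝ] E →L[ℝ] ℝ)
    (C := Module.finrank ℝ E / r + r / 2) (by positivity) ?_ hcauchy hcauchyΔ
  filter_upwards [hvΔ.prod_mk hvΔ] with q hq δ hδ hδΔ x hx
  have hvx (j : ι) (y : E) (hy : y ∈ ball x (2 * r)) : ContDiffAt ℝ 2 (v j) y :=
    hv j y (hsK x hx hy)
  have hxr : x ∈ ball x (2 * r) := mem_ball_self (by positivity)
  have hfderiv (y : E) (hy : y ∈ ball x (2 * r)) :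
      fderiv ℝ (v q.1 - v q.2) y = fderiv ℝ (v q.1) y - fderiv ℝ (v q.2) y :=
    fderiv_sub ((hvx q.1 y hy).differentiableAt two_ne_zero)
      ((hvx q.2 y hy).differentiableAt two_ne_zero)
  have hlip : LipschitzOnWith δ.toNNReal (Δ (v q.1) - Δ (v q.2)) (ball x (2 * r)) := by
    refine (convex_ball x _).lipschitzOnWith_of_nnnorm_fderiv_le (𝕜 := ℝ) (fun y hy => ?_)
      fun y hy => ?_
    · exact (hq.1 y (hsK x hx hy)).sub (hq.2 y (hsK x hx hy))
    · rw [fderiv_sub (hq.1 y (hsK x hx hy)) (hq.2 y (hsK x hx hy))]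
      exact NNReal.le_toNNReal_of_coe_le (hδΔ y (hsK x hx hy))
  have hhess := norm_fderiv_fderiv_le_of_lipschitzOnWith_laplacian (w := v q.1 - v q.2) hr
    (fun y hy => ((hvx q.1 y hy).sub (hvx q.2 y hy)).contDiffWithinAt)
    (fun y hy => by
      rw [hfderiv y hy]
      exact hδ y (hsK x hx hy))
    (fun y hy z hz => by
      rw [(hvx q.1 y hy).laplacian_sub (hvx q.2 y hy), (hvx q.1 z hz).laplacian_sub (hvx q.2 z hz)]
      exact hlip hy hz)
  have hsecond (j : ι) : DifferentiableAt ℝ (fderiv ℝ (v j)) x :=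
    ((hvx j x hxr).fderiv_right (m := 1) (by norm_num)).differentiableAt one_ne_zero
  rw [(eventuallyEq_of_mem (isOpen_ball.mem_nhds hxr) hfderiv).fderiv_eq,
    fderiv_fun_sub (hsecond q.1) (hsecond q.2),
    Real.coe_toNNReal δ ((norm_nonneg _).trans (hδ x (hsK x hx hxr)))] at hhess
  exact hhess.trans_eq (by ring)

variable [l.NeBot] {U : Set E} {u : E → ℝ}

theorem tendstoLocallyUniformlyOn_fderiv_of_laplacian {f : E → ℝ} (hU : IsOpen U)
    (hv : ∀ j, ContDiffOn ℝ 2 (v j) U) (hvu : TendstoLocallyUniformlyOn v u l U)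
    (hvΔ : TendstoLocallyUniformlyOn (fun j => Δ (v j)) f l U) :
    DifferentiableOn ℝ u U ∧
      TendstoLocallyUniformlyOn (fun j => fderiv ℝ (v j)) (fderiv ℝ u) l U := by
  refine tendstoLocallyUniformlyOn_fderiv_of_uniformCauchySeqOn hU
    (fun j => (hv j).differentiableOn two_ne_zero) (fun x hx => hvu.tendsto_at hx) fun x hx => ?_
  obtain ⟨r, hr, hball⟩ := nhds_basis_closedBall.mem_iff.1 (hU.mem_nhds hx)
  have hcompact := isCompact_closedBall x r
  refine ⟨ball x (r / 2), ball_mem_nhds x (half_pos hr),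
    uniformCauchySeqOn_fderiv_of_laplacian (K := closedBall x r) (half_pos hr)
      (fun y hy => closedBall_subset_closedBall' ?_)
      (fun j y hy => (hv j).contDiffAt (hU.mem_nhds (hball hy)))
      (uniformCauchySeqOn_of_tendstoLocallyUniformlyOn_of_isCompact hcompact (hvu.mono hball))
      (uniformCauchySeqOn_of_tendstoLocallyUniformlyOn_of_isCompact hcompact (hvΔ.mono hball))⟩
  linarith [mem_ball.1 hy]

theorem tendstoLocallyUniformlyOn_fderiv_fderiv_of_laplacian {f : E → ℝ} {g : E → E →L[ℝ] ℝ}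
    (hU : IsOpen U) (hv : ∀ j, ContDiffOn ℝ 2 (v j) U) (hvu : TendstoLocallyUniformlyOn v u l U)
    (hvΔ : TendstoLocallyUniformlyOn (fun j => Δ (v j)) f l U)
    (hdiff : ∀ x ∈ U, ∀ᶠ q : ι × E in l ×ˢ 𝓝 x, DifferentiableAt ℝ (Δ (v q.1)) q.2)
    (hvΔ' : TendstoLocallyUniformlyOn (fun j => fderiv ℝ (Δ (v j))) g l U) :
    DifferentiableOn ℝ (fderiv ℝ u) U ∧
      TendstoLocallyUniformlyOn (fun j => fderiv ℝ (fderiv ℝ (v j))) (fderiv ℝ (fderiv ℝ u))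
        l U := by
  have hvu' := (tendstoLocallyUniformlyOn_fderiv_of_laplacian hU hv hvu hvΔ).2
  have hsecond (j : ι) : DifferentiableOn ℝ (fderiv ℝ (v j)) U :=
    ((hv j).fderiv_of_isOpen hU (m := 1) (by norm_num)).differentiableOn one_ne_zero
  refine tendstoLocallyUniformlyOn_fderiv_of_uniformCauchySeqOn hU hsecond
    (fun x hx => hvu'.tendsto_at hx) fun x hx => ?_
  obtain ⟨P, hP, Q, hQ, hPQ⟩ := eventually_prod_iff.1 (hdiff x hx)
  obtain ⟨r, hr, hball⟩ := nhds_basis_closedBall.mem_iff.1 (inter_mem (hU.mem_nhds hx) hQ)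
  have hballU : closedBall x r ⊆ U := fun y hy => (hball hy).1
  have hcompact := isCompact_closedBall x r
  refine ⟨ball x (r / 3), ball_mem_nhds x (by positivity),
    uniformCauchySeqOn_fderiv_fderiv_of_laplacian (K := closedBall x r) (r := r / 3) (by positivity)
      (fun y hy => (ball_subset_ball' ?_).trans ball_subset_closedBall)
      (fun j y hy => (hv j).contDiffAt (hU.mem_nhds (hballU hy)))
      (hP.mono fun j hj y hy => hPQ hj (hball hy).2)
      (uniformCauchySeqOn_of_tendstoLocallyUniformlyOn_of_isCompact hcompact (hvu'.mono hballU))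
      (uniformCauchySeqOn_of_tendstoLocallyUniformlyOn_of_isCompact hcompact (hvΔ'.mono hballU))⟩
  linarith [mem_ball.1 hy]

theorem contDiffOn_two_and_laplacian_eq_of_tendstoLocallyUniformlyOn {f : E → ℝ}
    {g : E → E →L[ℝ] ℝ} (hU : IsOpen U) (hv : ∀ j, ContDiffOn ℝ 2 (v j) U)
    (hvu : TendstoLocallyUniformlyOn v u l U)
    (hvΔ : TendstoLocallyUniformlyOn (fun j => Δ (v j)) f l U)
    (hdiff : ∀ x ∈ U, ∀ᶠ q : ι × E in l ×ˢ 𝓝 x, DifferentiableAt ℝ (Δ (v q.1)) q.2)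
    (hvΔ' : TendstoLocallyUniformlyOn (fun j => fderiv ℝ (Δ (v j))) g l U) :
    ContDiffOn ℝ 2 u U ∧ ∀ x ∈ U, Δ u x = f x := by
  obtain ⟨hu, -⟩ := tendstoLocallyUniformlyOn_fderiv_of_laplacian hU hv hvu hvΔ
  obtain ⟨hu', hvu''⟩ :=
    tendstoLocallyUniformlyOn_fderiv_fderiv_of_laplacian hU hv hvu hvΔ hdiff hvΔ'
  have hcont : ContinuousOn (fderiv ℝ (fderiv ℝ u)) U :=
    hvu''.continuousOn <| .of_forall fun j =>
      ((hv j).fderiv_of_isOpen hU (m := 1) (by norm_num)).continuousOn_fderiv_of_isOpen hU le_rfl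
  refine ⟨?_, fun x hx => ?_⟩
  · have hu'C1 : ContDiffOn ℝ (0 + 1) (fderiv ℝ u) U :=
      (contDiffOn_succ_iff_fderiv_of_isOpen hU).2 ⟨hu', by simp, contDiffOn_zero.2 hcont⟩
    rw [zero_add] at hu'C1
    exact (contDiffOn_succ_iff_fderiv_of_isOpen (n := 1) hU).2 ⟨hu, by simp, hu'C1⟩
  · refine tendsto_nhds_unique ?_ (hvΔ.tendsto_at hx)
    simp only [laplacian_eq_sum_fderiv_fderiv (stdOrthonormalBasis ℝ E)]
    refine tendsto_finsetSum _ fun i _ => ?_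
    have heval : Continuous fun B : E →L[ℝ] E →L[ℝ] ℝ =>
        B (stdOrthonormalBasis ℝ E i) (stdOrthonormalBasis ℝ E i) := by fun_prop
    exact (heval.tendsto _).comp (hvu''.tendsto_at hx)

theorem contDiffOn_two_and_laplacian_eq_comp_of_tendstoLocallyUniformlyOn {F : ℝ → ℝ}
    (hU : IsOpen U) (hv : ∀ j, ContDiffOn ℝ 2 (v j) U) (hvu : TendstoLocallyUniformlyOn v u l U)
    (hF : ∀ x ∈ U, ContDiffAt ℝ 1 F (u x))
    (hΔ : ∀ x ∈ U, ∀ᶠ q : ι × E in l ×ˢ 𝓝 x, Δ (v q.1) q.2 = F (v q.1 q.2)) :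
    ContDiffOn ℝ 2 u U ∧ ∀ x ∈ U, Δ u x = F (u x) := by
  have hucont : ContinuousOn u U := hvu.continuousOn (.of_forall fun j => (hv j).continuousOn)
  have hvlim := (tendstoLocallyUniformlyOn_iff_tendsto_prod_nhds hU hucont).1 hvu
  have hFu (x : E) (hx : x ∈ U) : ContinuousAt (F ∘ u) x :=
    ContinuousAt.comp (hF x hx).continuousAt (hucont.continuousAt (hU.mem_nhds hx))
  have hvΔ : TendstoLocallyUniformlyOn (fun j => Δ (v j)) (F ∘ u) l U :=
    (tendstoLocallyUniformlyOn_iff_tendsto_prod_nhds hU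
      fun x hx => (hFu x hx).continuousWithinAt).2 fun x hx =>
        ((hF x hx).continuousAt.tendsto.comp (hvlim x hx)).congr'
          ((hΔ x hx).mono fun q hq => hq.symm)
  obtain ⟨-, hvu'⟩ := tendstoLocallyUniformlyOn_fderiv_of_laplacian hU hv hvu hvΔ
  have hu'cont : ContinuousOn (fderiv ℝ u) U := hvu'.continuousOn <| .of_forall fun j =>
    (hv j).continuousOn_fderiv_of_isOpen hU one_le_two
  have hv'lim := (tendstoLocallyUniformlyOn_iff_tendsto_prod_nhds hU hu'cont).1 hvu'
  have hderivΔ (x : E) (hx : x ∈ U) : ∀ᶠ q : ι × E in l ×ˢ 𝓝 x,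
      HasFDerivAt (Δ (v q.1)) (deriv F (v q.1 q.2) • fderiv ℝ (v q.1) q.2) q.2 := by
    refine eventually_hasFDerivAt_of_eventually_eq_comp (w := fun j => Δ (v j)) (hvlim x hx) ?_
      (((hF x hx).eventually (by simp)).mono fun s hs => hs.differentiableAt one_ne_zero) (hΔ x hx)
    filter_upwards [tendsto_snd.eventually (hU.mem_nhds hx)] with q hq
    exact ((hv q.1).contDiffAt (hU.mem_nhds hq)).differentiableAt two_ne_zero
  have hF' (x : E) (hx : x ∈ U) : ContinuousAt (deriv F) (u x) :=
    ((hF x hx).continuousAt_fderiv one_ne_zero).clm_apply continuousAt_const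
  refine contDiffOn_two_and_laplacian_eq_of_tendstoLocallyUniformlyOn
    (g := fun x => deriv F (u x) • fderiv ℝ u x) hU hv hvu hvΔ
    (fun x hx => (hderivΔ x hx).mono fun q hq => hq.differentiableAt) ?_
  refine (tendstoLocallyUniformlyOn_iff_tendsto_prod_nhds hU fun x hx => ?_).2 fun x hx => ?_
  · have hux := hucont.continuousAt (hU.mem_nhds hx)
    exact ((ContinuousAt.comp (hF' x hx) hux).smul
      (hu'cont.continuousAt (hU.mem_nhds hx))).continuousWithinAt
  · exact (((hF' x hx).tendsto.comp (hvlim x hx)).smul (hv'lim x hx)).congr'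
      ((hderivΔ x hx).mono fun q hq => hq.fderiv.symm)

end LaplacianConvergence

theorem penalization_eq_zero_of_le_one {β : ℝ → ℝ} (hβ : ∀ s ∉ Ioo (0 : ℝ) 1, β s = 0)
    {p ε s : ℝ} (hp : 1 < p) (hε : 0 < ε) (hs : s ≤ 1) :
    1 / ε * β ((s - 1) / ε) - max (s - 1) 0 ^ (p - 1) = 0 := by
  have hsε : (s - 1) / ε ≤ 0 := div_nonpos_of_nonpos_of_nonneg (sub_nonpos.2 hs) hε.le
  rw [hβ _ fun h => hsε.not_gt h.1, mul_zero, max_eq_right (sub_nonpos.2 hs),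
    Real.zero_rpow (sub_pos.2 hp).ne', sub_zero]

theorem penalization_eq_neg_rpow_of_one_add_le {β : ℝ → ℝ} (hβ : ∀ s ∉ Ioo (0 : ℝ) 1, β s = 0)
    {p ε s : ℝ} (hε : 0 < ε) (hs : 1 + ε ≤ s) :
    1 / ε * β ((s - 1) / ε) - max (s - 1) 0 ^ (p - 1) = -(s - 1) ^ (p - 1) := by
  have hsε : 1 ≤ (s - 1) / ε := (one_le_div hε).2 (by linarith)
  rw [hβ _ fun h => hsε.not_gt h.2, mul_zero, max_eq_left (by linarith), zero_sub]

theorem stmt_15_general {E : Type*} [NormedAddCommGroup E] [InnerProductSpace ℝ E]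
    [FiniteDimensional ℝ E] {ι : Type*} {l : Filter ι} [l.NeBot] {Ω : Set E} (hΩ : IsOpen Ω)
    {p : ℝ} (hp : 1 < p) {β : ℝ → ℝ} (hβ : ∀ s ∉ Ioo (0 : ℝ) 1, β s = 0)
    {ε : ι → ℝ} (hε : ∀ j, 0 < ε j) (hεlim : Tendsto ε l (𝓝 0)) {v : ι → E → ℝ}
    (hv : ∀ j, ContDiffOn ℝ 2 (v j) Ω)
    (hΔ : ∀ j, ∀ x ∈ Ω,
      Δ (v j) x = 1 / ε j * β ((v j x - 1) / ε j) - max (v j x - 1) 0 ^ (p - 1))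
    {u : E → ℝ} (hvu : TendstoLocallyUniformlyOn v u l Ω) :
    (∀ x ∈ Ω, 1 < u x → ContDiffAt ℝ 2 u x ∧ -Δ u x = (u x - 1) ^ (p - 1)) ∧
      HarmonicOnNhd u {x ∈ Ω | u x < 1} := by
  have hucont : ContinuousOn u Ω := hvu.continuousOn (.of_forall fun j => (hv j).continuousOn)
  have hvlim := (tendstoLocallyUniformlyOn_iff_tendsto_prod_nhds hΩ hucont).1 hvu
  have hΩnhds (x : E) (hx : x ∈ Ω) : ∀ᶠ q : ι × E in l ×ˢ 𝓝 x, q.2 ∈ Ω :=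
    tendsto_snd.eventually (hΩ.mem_nhds hx)
  constructor
  · have hopen : IsOpen (Ω ∩ u ⁻¹' Ioi 1) := hucont.isOpen_inter_preimage hΩ isOpen_Ioi
    obtain ⟨hu, hΔu⟩ := contDiffOn_two_and_laplacian_eq_comp_of_tendstoLocallyUniformlyOn
      (F := fun s => -(s - 1) ^ (p - 1)) hopen
      (fun j => (hv j).mono inter_subset_left) (hvu.mono inter_subset_left)
      (fun x hx => (ContDiffAt.rpow_const_of_ne (contDiffAt_id.sub contDiffAt_const)
        (sub_pos.2 hx.2).ne').neg) fun x ⟨hx, hx1⟩ => by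
        have hgap : Tendsto (fun q : ι × E => v q.1 q.2 - ε q.1) (l ×ˢ 𝓝 x) (𝓝 (u x)) := by
          simpa using (hvlim x hx).sub (hεlim.comp tendsto_fst)
        filter_upwards [hΩnhds x hx, hgap.eventually_const_lt hx1] with q hqΩ hq
        rw [hΔ q.1 q.2 hqΩ,
          penalization_eq_neg_rpow_of_one_add_le hβ (hε q.1) (lt_sub_iff_add_lt.1 hq).le]
    exact fun x hx hx1 => ⟨hu.contDiffAt (hopen.mem_nhds ⟨hx, hx1⟩),
      neg_eq_iff_eq_neg.2 (hΔu x ⟨hx, hx1⟩)⟩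
  · have hopen : IsOpen (Ω ∩ u ⁻¹' Iio 1) := hucont.isOpen_inter_preimage hΩ isOpen_Iio
    obtain ⟨hu, hΔu⟩ := contDiffOn_two_and_laplacian_eq_comp_of_tendstoLocallyUniformlyOn
      (F := fun _ => 0) hopen
      (fun j => (hv j).mono inter_subset_left) (hvu.mono inter_subset_left)
      (fun x _ => contDiffAt_const) fun x ⟨hx, hx1⟩ => by
        filter_upwards [hΩnhds x hx, (hvlim x hx).eventually_lt_const hx1] with q hqΩ hq
        rw [hΔ q.1 q.2 hqΩ, penalization_eq_zero_of_le_one hβ hp (hε q.1) hq.le]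
    exact fun x hx => ⟨hu.contDiffAt (hopen.mem_nhds hx),
      eventually_of_mem (hopen.mem_nhds hx) hΔu⟩

theorem lap_eq_laplacian {N : ℕ} {w : EuclideanSpace ℝ (Fin N) → ℝ}
    {x : EuclideanSpace ℝ (Fin N)} (hw : ContDiffAt ℝ 2 w x) : lap w x = Δ w x := by
  have hw' : DifferentiableAt ℝ (fderiv ℝ w) x :=
    (hw.fderiv_right (m := 1) (by norm_num)).differentiableAt one_ne_zero
  simp [lap, laplacian_eq_sum_fderiv_fderiv (EuclideanSpace.basisFun (Fin N) ℝ),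
    fderiv_clm_apply hw' (differentiableAt_const _)]

end

theorem stmt_15 {N : ℕ} (hN : 2 ≤ N) (Ω : Set (EuclideanSpace ℝ (Fin N)))
    (hΩo : IsOpen Ω) (p : ℝ) (hp : 2 < p)
    (β : ℝ → ℝ) (hβc : Continuous β) (hβ0 : ∀ s ∉ Set.Ioo (0 : ℝ) 1, β s = 0)
    (ε : ℕ → ℝ) (hε : ∀ j, ε j ∈ Set.Ioc (0 : ℝ) 1)
    (hεlim : Tendsto ε atTop (nhds 0))
    (useq : ℕ → EuclideanSpace ℝ (Fin N) → ℝ)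
    (huC2 : ∀ j, ContDiffOn ℝ 2 (useq j) Ω)
    (hueq : ∀ j, ∀ x ∈ Ω, lap (useq j) x
      = (1 / ε j) * β ((useq j x - 1) / ε j) - (max (useq j x - 1) 0) ^ (p - 1))
    (u : EuclideanSpace ℝ (Fin N) → ℝ)
    (hconv : TendstoLocallyUniformlyOn useq u atTop Ω) :
    (ContDiffOn ℝ 2 u {x ∈ Ω | 1 < u x}
      ∧ ∀ x ∈ {x ∈ Ω | 1 < u x}, -lap u x = (u x - 1) ^ (p - 1))
    ∧ (ContDiffOn ℝ 2 u {x ∈ Ω | u x < 1}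
      ∧ ∀ x ∈ {x ∈ Ω | u x < 1}, lap u x = 0) := by
  have hΔ (j : ℕ) (x : EuclideanSpace ℝ (Fin N)) (hx : x ∈ Ω) :=
    (lap_eq_laplacian ((huC2 j).contDiffAt (hΩo.mem_nhds hx))).symm.trans (hueq j x hx)
  obtain ⟨hgt, hlt⟩ := stmt_15_general hΩo (by linarith) hβ0 (fun j => (hε j).1) hεlim huC2 hΔ hconv
  refine ⟨⟨fun x hx => (hgt x hx.1 hx.2).1.contDiffWithinAt, fun x hx => ?_⟩,
    fun x hx => (hlt x hx).1.contDiffWithinAt, fun x hx => ?_⟩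
  · rw [lap_eq_laplacian (hgt x hx.1 hx.2).1, (hgt x hx.1 hx.2).2]
  · rw [lap_eq_laplacian (hlt x hx).1, (hlt x hx).2.self_of_nhds, Pi.zero_apply]
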